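/- Let E be a finite set, ρ a rank function on E, k > 0 with ρ(U)/k ∈ ℕ for all U ⊆ E, and d > 0 with d/k ∈ ℕ and d ≤ ρ(E). Let x ∈ P^k_ρ(d), let e, f ∈ E with e ≠ f, and suppose there exists α > 0 such that x + α(χ_e − χ_f) ∈ P_ρ(d). Then x + k⌈α/k⌉(χ_e − χ_f) ∈ P^k_ρ(d). -/

import Mathlib

/-- A rank function: submodular, monotone, normalized set function. -/
def IsRank {E : Type*} [Fintype E] [DecidableEq E] (ρ : Finset E → ℝ) : Prop :=
  (∀ U V : Finset E, ρ (U ∪ V) + ρ (U ∩ V) ≤ ρ U + ρ V) ∧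
  (∀ U V : Finset E, U ⊆ V → ρ U ≤ ρ V) ∧ ρ ∅ = 0

/-- Membership in the polymatroid base polytope `P_ρ(d)`. -/
def memBase {E : Type*} [Fintype E] [DecidableEq E] (ρ : Finset E → ℝ) (d : ℝ)
    (x : E → ℝ) : Prop :=
  (∀ e, 0 ≤ x e) ∧ (∀ U : Finset E, ∑ e ∈ U, x e ≤ ρ U) ∧ (∑ e, x e = d)

/-- Membership in the `k`-integral base polytope `P^k_ρ(d)`. -/
def memKBase {E : Type*} [Fintype E] [DecidableEq E] (ρ : Finset E → ℝ) (d k : ℝ)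
    (x : E → ℝ) : Prop :=
  memBase ρ d x ∧ ∀ e, ∃ q : ℕ, x e = k * q

/-- Rounding `α` up to a multiple of `k` preserves upper bounds that are multiples of `k`. -/
lemma mul_ceil_div_le_of_le_mul {k α : ℝ} (hk : 0 < k) {z : ℤ} (h : α ≤ k * z) :
    k * (⌈α / k⌉ : ℤ) ≤ k * z := by
  have hz : ⌈α / k⌉ ≤ z := Int.ceil_le.2 ((div_le_iff₀' hk).2 h)
  have hz' : (⌈α / k⌉ : ℝ) ≤ z := by exact_mod_cast hz
  exact mul_le_mul_of_nonneg_left hz' hk.le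

/-- The load of a set after shifting `c` units from `f` to `e`. -/
lemma sum_exchange {E : Type*} [DecidableEq E] (x : E → ℝ) (c : ℝ) (e f : E) (U : Finset E) :
    ∑ e' ∈ U, (x e' + c * ((if e' = e then 1 else 0) - (if e' = f then 1 else 0))) =
      ∑ e' ∈ U, x e' + c * ((if e ∈ U then 1 else 0) - (if f ∈ U then 1 else 0)) := by
  simp [Finset.sum_add_distrib, ← Finset.mul_sum, Finset.sum_sub_distrib]

/-- A sum of multiples of `k` is a multiple of `k`. -/
lemma exists_sum_eq_mul_natCast {E : Type*} {k : ℝ} {x : E → ℝ}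
    (hx : ∀ e, ∃ q : ℕ, x e = k * q) (U : Finset E) :
    ∃ q : ℕ, ∑ e ∈ U, x e = k * q := by
  choose q hq using hx
  exact ⟨∑ e ∈ U, q e, by simp [hq, Finset.mul_sum]⟩

/-- The rounding step in the proof of Lemma 1 of the paper: if all rank values
and the demand are integer multiples of `k`, a feasible fractional exchange
`x + α(χ_e − χ_f)` between two resources can be rounded up to the feasible
`k`-integral exchange `x + k⌈α/k⌉(χ_e − χ_f)`. -/
theorem stmt_5 {E : Type*} [Fintype E] [DecidableEq E]
    (ρ : Finset E → ℝ) (hρ : IsRank ρ)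
    (k : ℝ) (hk : 0 < k) (hρk : ∀ U, ∃ q : ℕ, ρ U = k * q)
    (d : ℝ) (hd : 0 < d) (hdk : ∃ q : ℕ, d = k * q) (hdρ : d ≤ ρ Finset.univ)
    (x : E → ℝ) (hx : memKBase ρ d k x)
    (e f : E) (hef : e ≠ f)
    (α : ℝ) (hα : 0 < α)
    (hfeas : memBase ρ d
      (fun e' => x e' + α * ((if e' = e then 1 else 0) - (if e' = f then 1 else 0)))) :
    memKBase ρ d k
      (fun e' => x e' +
        (k * (⌈α / k⌉ : ℤ)) * ((if e' = e then 1 else 0) - (if e' = f then 1 else 0))) := by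
  obtain ⟨⟨hx0, hxU, hxd⟩, hxk⟩ := hx
  obtain ⟨hy0, hyU, -⟩ := hfeas
  have hn : 0 ≤ ⌈α / k⌉ := Int.ceil_nonneg (div_pos hα hk).le
  have hc : 0 ≤ k * (⌈α / k⌉ : ℤ) := mul_nonneg hk.le (by exact_mod_cast hn)
  have hround : ∀ p q : ℕ, k * p + α ≤ k * q → k * p + k * (⌈α / k⌉ : ℤ) ≤ k * q := by
    intro p q h
    have := mul_ceil_div_le_of_le_mul (α := α) (z := (q : ℤ) - p) hk (by push_cast; linarith)
    push_cast at this
    linarith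
  have hnonneg : ∀ e', 0 ≤ x e' +
      (k * (⌈α / k⌉ : ℤ)) * ((if e' = e then 1 else 0) - (if e' = f then 1 else 0)) := by
    intro e'
    by_cases hf : e' = f
    · subst hf
      obtain ⟨q, hq⟩ := hxk e'
      have hy := hy0 e'
      simp only [hef.symm, if_true, if_false] at hy ⊢
      have := hround 0 q (by push_cast; linarith)
      push_cast at this
      linarith
    · have := hx0 e'
      rw [if_neg hf, sub_zero]
      split_ifs <;> linarith
  refine ⟨⟨hnonneg, fun U => ?_, ?_⟩, fun e' => ?_⟩
  · have hy := hyU U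
    have hxU' := hxU U
    rw [sum_exchange] at hy ⊢
    by_cases he : e ∈ U <;> by_cases hf : f ∈ U <;> simp only [he, hf, if_true, if_false] at hy ⊢
    · linarith
    · obtain ⟨p, hp⟩ := exists_sum_eq_mul_natCast hxk U
      obtain ⟨q, hq⟩ := hρk U
      have := hround p q (by linarith)
      linarith
    · linarith
    · linarith
  · rw [sum_exchange]
    simpa using hxd
  · obtain ⟨q, hq⟩ := hxk e'
    obtain ⟨z, hz⟩ : ∃ z : ℤ, x e' + (k * (⌈α / k⌉ : ℤ)) *
        ((if e' = e then 1 else 0) - (if e' = f then 1 else 0)) = k * z :=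
      ⟨q + ⌈α / k⌉ * ((if e' = e then 1 else 0) - (if e' = f then 1 else 0)), by
        rw [hq]; push_cast; ring⟩
    have hz0 : 0 ≤ z := by
      have h := hnonneg e'
      rw [hz] at h
      exact_mod_cast nonneg_of_mul_nonneg_right h hk
    lift z to ℕ using hz0
    exact ⟨z, by simpa using hz⟩
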